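/- arXiv:1607.03821 — 2 statements merged into one kernel-verified Lean document; each statement's English description precedes it below -/
import Mathlib

section
/- For every n ≥ 2 and m ≥ 2, there is no deterministic mechanism (f, p) for n value bidders and m identical units that is simultaneously individually rational, truthful for value bidders, and revenue maximizing (its revenue Σ_i p_i(v) equals the optimal revenue on every profile of valuations). -/
/-- A multi-unit valuation: `v 0 = 0`, monotone nondecreasing, nonnegative. -/
def MUValuation (v : ℕ → ℝ) : Prop := v 0 = 0 ∧ Monotone v ∧ ∀ s, 0 ≤ v s

/-- The optimal revenue of a profile in the `n × m` multi-unit market: the maximum over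
allocations `(s₁,…,sₙ)` with `∑ sᵢ ≤ m` of `∑ vᵢ(sᵢ)`. -/
noncomputable def optRevMU (n m : ℕ) (v : Fin n → ℕ → ℝ) : ℝ :=
  sSup {x : ℝ | ∃ s : Fin n → ℕ, (∑ i, s i) ≤ m ∧ x = ∑ i, v i (s i)}

/-- The revenue of any feasible allocation is at most the optimal revenue. -/
lemma sum_le_optRevMU {n m : ℕ} {v : Fin n → ℕ → ℝ} (hv : ∀ i, MUValuation (v i))
    {s : Fin n → ℕ} (hs : ∑ i, s i ≤ m) : ∑ i, v i (s i) ≤ optRevMU n m v := by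
  refine le_csSup ⟨∑ i, v i m, ?_⟩ ⟨s, hs, rfl⟩
  rintro x ⟨t, ht, rfl⟩
  exact Finset.sum_le_sum fun i _ => (hv i).2.1 <|
    (Finset.single_le_sum (f := t) (fun _ _ => Nat.zero_le _) (Finset.mem_univ i)).trans ht

/-- The valuation worth `a` for at least one unit and `b` for at least `m` units. -/
noncomputable def twoStepValuation (m : ℕ) (a b : ℝ) (s : ℕ) : ℝ :=
  if s = 0 then 0 else if s < m then a else b

lemma muValuation_twoStepValuation (m : ℕ) {a b : ℝ} (ha : 0 ≤ a) (hab : a ≤ b) :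
    MUValuation (twoStepValuation m a b) := by
  refine ⟨by simp [twoStepValuation], fun s t hst => ?_, fun s => ?_⟩ <;>
    unfold twoStepValuation <;> split_ifs <;> first | linarith | omega

/-- The profile in which only bidders `i` and `j` have nonzero valuations `a` and `b`. -/
noncomputable def twoBidderProfile {n : ℕ} (i j : Fin n) (a b : ℕ → ℝ) : Fin n → ℕ → ℝ :=
  Function.update (Function.update 0 j b) i a

lemma muValuation_twoBidderProfile {n : ℕ} {i j : Fin n} {a b : ℕ → ℝ}
    (ha : MUValuation a) (hb : MUValuation b) (k : Fin n) :
    MUValuation (twoBidderProfile i j a b k) := by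
  unfold twoBidderProfile
  rcases eq_or_ne k i with rfl | hki
  · simpa using ha
  rcases eq_or_ne k j with rfl | hkj
  · simpa [hki] using hb
  · rw [Function.update_of_ne hki, Function.update_of_ne hkj]
    exact ⟨rfl, monotone_const, fun _ => le_rfl⟩

lemma sum_twoBidderProfile {n : ℕ} {i j : Fin n} (hij : i ≠ j) (a b : ℕ → ℝ)
    (s : Fin n → ℕ) : ∑ k, twoBidderProfile i j a b k (s k) = a (s i) + b (s j) := by
  rw [Fintype.sum_eq_add i j hij]
  · simp [twoBidderProfile, hij.symm]
  · rintro k ⟨hki, hkj⟩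
    simp [twoBidderProfile, hki, hkj]

lemma add_le_optRevMU_twoBidderProfile {n m : ℕ} {i j : Fin n} (hij : i ≠ j) {a b : ℕ → ℝ}
    (ha : MUValuation a) (hb : MUValuation b) {x y : ℕ} (hxy : x + y ≤ m) :
    a x + b y ≤ optRevMU n m (twoBidderProfile i j a b) := by
  have hs : ∑ k, (Pi.single i x + Pi.single j y : Fin n → ℕ) k ≤ m := by
    simpa [Finset.sum_add_distrib] using hxy
  have h := sum_le_optRevMU (muValuation_twoBidderProfile (i := i) (j := j) ha hb) hs
  rw [sum_twoBidderProfile hij] at h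
  simpa [hij, hij.symm] using h

/-- for `n ≥ 2` and `m ≥ 2`, there is no deterministic mechanism for `n`
value bidders and `m` identical units that is individually rational, truthful for value
bidders, and revenue maximizing. -/
theorem no_truthful_revenue_maximizing_multiunit (n m : ℕ) (hn : 2 ≤ n) (hm : 2 ≤ m) :
    ¬ ∃ (f : (Fin n → ℕ → ℝ) → Fin n → ℕ) (p : (Fin n → ℕ → ℝ) → Fin n → ℝ),
      (∀ v, (∀ i, MUValuation (v i)) → (∑ i, f v i) ≤ m) ∧
      (∀ v, (∀ i, MUValuation (v i)) → ∀ i, p v i ≤ v i (f v i)) ∧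
      (∀ v, (∀ i, MUValuation (v i)) → ∀ (i : Fin n) (v' : ℕ → ℝ), MUValuation v' →
        (p (Function.update v i v') i ≤ v i (f (Function.update v i v') i) →
          v i (f (Function.update v i v') i) ≤ v i (f v i))) ∧
      (∀ v, (∀ i, MUValuation (v i)) → (∑ i, p v i) = optRevMU n m v) := by
  rintro ⟨f, p, hfeas, hir, htruth, hrev⟩
  obtain ⟨i, j, hij⟩ : ∃ i j : Fin n, i ≠ j :=
    ⟨⟨0, by omega⟩, ⟨1, by omega⟩, by simp⟩
  have hb : MUValuation (twoStepValuation m 2 2) :=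
    muValuation_twoStepValuation m (by norm_num) le_rfl
  have ha : MUValuation (twoStepValuation m 2 3) :=
    muValuation_twoStepValuation m (by norm_num) (by norm_num)
  have ha' : MUValuation (twoStepValuation m 0 3) :=
    muValuation_twoStepValuation m le_rfl (by norm_num)
  have key : ∀ a, MUValuation a → ∀ x y, x + y ≤ m →
      a x + twoStepValuation m 2 2 y ≤
        a (f (twoBidderProfile i j a (twoStepValuation m 2 2)) i) +
        twoStepValuation m 2 2 (f (twoBidderProfile i j a (twoStepValuation m 2 2)) j) := by
    intro a ha x y hxy
    have hv := muValuation_twoBidderProfile (i := i) (j := j) ha hb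
    rw [← sum_twoBidderProfile hij]
    exact (add_le_optRevMU_twoBidderProfile hij ha hb hxy).trans
      ((hrev _ hv).symm.le.trans (Finset.sum_le_sum fun k _ => hir _ hv k))
  have hupdate : Function.update
      (twoBidderProfile i j (twoStepValuation m 2 3) (twoStepValuation m 2 2)) i
      (twoStepValuation m 0 3) =
      twoBidderProfile i j (twoStepValuation m 0 3) (twoStepValuation m 2 2) := by
    simp [twoBidderProfile]
  have htrue := key _ ha 1 1 hm
  have hmis := key _ ha' m 0 le_rfl
  have hv := muValuation_twoBidderProfile (i := i) (j := j) ha hb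
  have hpay := hir _ (muValuation_twoBidderProfile (i := i) (j := j) ha' hb) i
  have hdev := htruth _ hv i _ ha'
  have hsum : f (twoBidderProfile i j (twoStepValuation m 2 3) (twoStepValuation m 2 2)) i +
      f (twoBidderProfile i j (twoStepValuation m 2 3) (twoStepValuation m 2 2)) j ≤ m := by
    refine le_trans ?_ (hfeas _ hv)
    rw [← Finset.sum_pair hij]
    exact Finset.sum_le_sum_of_subset (Finset.subset_univ _)
  rw [hupdate] at hdev
  have hself : ∀ a b : ℕ → ℝ, twoBidderProfile i j a b i = a := by simp [twoBidderProfile]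
  rw [hself] at hpay hdev
  generalize f (twoBidderProfile i j (twoStepValuation m 2 3) (twoStepValuation m 2 2)) = s at *
  generalize f (twoBidderProfile i j (twoStepValuation m 0 3) (twoStepValuation m 2 2)) = t at *
  -- The misreport wins all `m` units, at a price equal to their true value.
  have ht : m ≤ t i := by
    by_contra hlt
    have hm0 : m ≠ 0 := by omega
    simp only [twoStepValuation, hm0, lt_irrefl, if_true, if_false] at hmis
    split_ifs at hmis <;> first | omega | linarith
  have hval : ∀ a : ℝ, twoStepValuation m a 3 (t i) = 3 := fun a => by
    rw [twoStepValuation, if_neg (by omega), if_neg (by omega)]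
  rw [hval] at hpay hdev
  have hs := hdev hpay
  -- Truthfully the bidder would then also win all units, which is suboptimal.
  simp only [twoStepValuation, one_ne_zero, if_false, if_pos (show 1 < m by omega)] at hs htrue
  split_ifs at hs htrue <;> first | omega | linarith
end

section
/- For every ε > 0 and every deterministic mechanism (f, p) for 2 bidders and 3 identical units, defined on the domain of profiles with v_1(3) > v_2(3) (bidder 1 is the public strongest bidder), that is individually rational and truthful for value bidders, there exists a profile v in the domain for which the revenue Σ_i p_i(v) is strictly less than (1/2 + ε) times the optimal revenue. -/
/-- Optimal revenue with two bidders and `m` identical units: the maximum over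
allocations `(s₁, s₂)` with `s₁ + s₂ ≤ m` of `v₁(s₁) + v₂(s₂)`. -/
noncomputable def optRevTwo (m : ℕ) (v₁ v₂ : ℕ → ℝ) : ℝ :=
  sSup {x : ℝ | ∃ s₁ s₂ : ℕ, s₁ + s₂ ≤ m ∧ x = v₁ s₁ + v₂ s₂}

/-- The valuation with values `a`, `b`, `c` on `1`, `2` and at least `3` units. -/
def threeUnitVal (a b c : ℝ) : ℕ → ℝ
  | 0 => 0
  | 1 => a
  | 2 => b
  | _ + 3 => c

lemma muValuation_threeUnitVal {a b c : ℝ} (ha : 0 ≤ a) (hab : a ≤ b) (hbc : b ≤ c) :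
    MUValuation (threeUnitVal a b c) := by
  have hmono : Monotone (threeUnitVal a b c) := by
    refine monotone_nat_of_le_succ fun n => ?_
    match n with
    | 0 => exact ha
    | 1 => exact hab
    | 2 => exact hbc
    | _ + 3 => exact le_rfl
  exact ⟨rfl, hmono, fun s => hmono (Nat.zero_le s)⟩

lemma le_optRevTwo {m : ℕ} {v₁ v₂ : ℕ → ℝ} (h₁ : MUValuation v₁) (h₂ : MUValuation v₂)
    {s₁ s₂ : ℕ} (hs : s₁ + s₂ ≤ m) : v₁ s₁ + v₂ s₂ ≤ optRevTwo m v₁ v₂ := by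
  refine le_csSup ⟨v₁ m + v₂ m, ?_⟩ ⟨s₁, s₂, hs, rfl⟩
  rintro x ⟨t₁, t₂, ht, rfl⟩
  exact add_le_add (h₁.2.1 (by omega)) (h₂.2.1 (by omega))

/-- for every `ε > 0`, every deterministic, individually rational
mechanism for 2 bidders and 3 identical units on the domain `v₁(3) > v₂(3)` (bidder 1
is the public strongest bidder) that is truthful for value bidders has a profile in the
domain on which its revenue is less than `(1/2 + ε)` times the optimal revenue. -/
theorem no_truthful_2x3_mechanism_beats_one_half
    (ε : ℝ) (hε : 0 < ε)
    (f : (ℕ → ℝ) → (ℕ → ℝ) → ℕ × ℕ) (p : (ℕ → ℝ) → (ℕ → ℝ) → ℝ × ℝ)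
    (hfeas : ∀ v₁ v₂, MUValuation v₁ → MUValuation v₂ → v₂ 3 < v₁ 3 →
      (f v₁ v₂).1 + (f v₁ v₂).2 ≤ 3)
    (hIR : ∀ v₁ v₂, MUValuation v₁ → MUValuation v₂ → v₂ 3 < v₁ 3 →
      (p v₁ v₂).1 ≤ v₁ (f v₁ v₂).1 ∧ (p v₁ v₂).2 ≤ v₂ (f v₁ v₂).2)
    (htruth₁ : ∀ v₁ v₂ v₁', MUValuation v₁ → MUValuation v₂ → MUValuation v₁' →
      v₂ 3 < v₁ 3 → v₂ 3 < v₁' 3 →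
      ((p v₁' v₂).1 ≤ v₁ (f v₁' v₂).1 → v₁ (f v₁' v₂).1 ≤ v₁ (f v₁ v₂).1))
    (htruth₂ : ∀ v₁ v₂ v₂', MUValuation v₁ → MUValuation v₂ → MUValuation v₂' →
      v₂ 3 < v₁ 3 → v₂' 3 < v₁ 3 →
      ((p v₁ v₂').2 ≤ v₂ (f v₁ v₂').2 → v₂ (f v₁ v₂').2 ≤ v₂ (f v₁ v₂).2)) :
    ∃ v₁ v₂ : ℕ → ℝ, MUValuation v₁ ∧ MUValuation v₂ ∧ v₂ 3 < v₁ 3 ∧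
      (p v₁ v₂).1 + (p v₁ v₂).2 < (1 / 2 + ε) * optRevTwo 3 v₁ v₂ := by
  by_contra! hrev
  obtain ⟨d, hd, hdε, hd4⟩ : ∃ d : ℝ, 0 < d ∧ d ≤ ε ∧ d ≤ 1 / 4 :=
    ⟨min ε (1 / 4), by positivity, min_le_left _ _, min_le_right _ _⟩
  have welfare : ∀ {v₁ v₂ : ℕ → ℝ}, MUValuation v₁ → MUValuation v₂ → v₂ 3 < v₁ 3 →
      ∀ {s₁ s₂ : ℕ}, s₁ + s₂ ≤ 3 →
      (1 / 2 + d) * (v₁ s₁ + v₂ s₂) ≤ v₁ (f v₁ v₂).1 + v₂ (f v₁ v₂).2 := by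
    intro v₁ v₂ h₁ h₂ hlt s₁ s₂ hs
    have hIR' := hIR v₁ v₂ h₁ h₂ hlt
    calc (1 / 2 + d) * (v₁ s₁ + v₂ s₂)
        ≤ (1 / 2 + ε) * optRevTwo 3 v₁ v₂ :=
          mul_le_mul (by linarith) (le_optRevTwo h₁ h₂ hs)
            (add_nonneg (h₁.2.2 _) (h₂.2.2 _)) (by linarith)
      _ ≤ (p v₁ v₂).1 + (p v₁ v₂).2 := hrev v₁ v₂ h₁ h₂ hlt
      _ ≤ _ := add_le_add hIR'.1 hIR'.2
  -- At `(strong, weak)` each bidder mainly wants two units. Raising the one-unit value of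
  -- either bidder forces that bidder down to a single unit.
  let strong := threeUnitVal 0 1 (1 + d)
  let strong' := threeUnitVal 1 (1 + d) (1 + d)
  let weak := threeUnitVal 0 1 1
  let weak' := threeUnitVal (1 - d) 1 1
  have hS : MUValuation strong :=
    muValuation_threeUnitVal le_rfl zero_le_one (by linarith)
  have hS' : MUValuation strong' :=
    muValuation_threeUnitVal zero_le_one (by linarith) le_rfl
  have hW : MUValuation weak := muValuation_threeUnitVal le_rfl zero_le_one le_rfl
  have hW' : MUValuation weak' :=
    muValuation_threeUnitVal (by linarith) (by linarith) le_rfl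
  have hlt : (1 : ℝ) < 1 + d := by linarith
  have weak'_one : (f strong weak').2 ≤ 1 := by
    have hw := welfare hS hW' hlt (s₁ := 2) (s₂ := 1) le_rfl
    have hf := hfeas strong weak' hS hW' hlt
    by_contra! hgt
    have h₁ : strong (f strong weak').1 ≤ 0 :=
      hS.2.1 (show (f strong weak').1 ≤ 1 by omega)
    have h₂ : weak' (f strong weak').2 ≤ 1 :=
      hW'.2.1 (show (f strong weak').2 ≤ 3 by omega)
    change (1 / 2 + d) * (1 + (1 - d)) ≤ _ at hw
    nlinarith
  have strong'_one : (f strong' weak).1 ≤ 1 := by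
    have hw := welfare hS' hW hlt (s₁ := 1) (s₂ := 2) le_rfl
    have hf := hfeas strong' weak hS' hW hlt
    by_contra! hgt
    have h₁ : strong' (f strong' weak).1 ≤ 1 + d :=
      hS'.2.1 (show (f strong' weak).1 ≤ 3 by omega)
    have h₂ : weak (f strong' weak).2 ≤ 0 :=
      hW.2.1 (show (f strong' weak).2 ≤ 1 by omega)
    change (1 / 2 + d) * (1 + 1) ≤ _ at hw
    linarith
  have hf := hfeas strong weak hS hW hlt
  have hIR' := hIR strong weak hS hW hlt
  have strong_one : (f strong weak).1 ≤ 1 := by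
    by_contra! hgt
    have hle : strong (f strong weak).1 ≤ 1 + d :=
      hS.2.1 (show (f strong weak).1 ≤ 3 by omega)
    have hge : 1 + d ≤ strong' (f strong weak).1 :=
      hS'.2.1 (show 2 ≤ (f strong weak).1 from hgt)
    have ht := htruth₁ strong' weak strong hS' hW hS hlt hlt (by linarith)
    have hone : strong' (f strong' weak).1 ≤ 1 := hS'.2.1 strong'_one
    linarith
  have weak_one : (f strong weak).2 ≤ 1 := by
    by_contra! hgt
    have hle : weak (f strong weak).2 ≤ 1 :=
      hW.2.1 (show (f strong weak).2 ≤ 3 by omega)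
    have hge : 1 ≤ weak' (f strong weak).2 :=
      hW'.2.1 (show 2 ≤ (f strong weak).2 from hgt)
    have ht := htruth₂ strong weak' weak hS hW' hW hlt hlt (by linarith)
    have hone : weak' (f strong weak').2 ≤ 1 - d := hW'.2.1 weak'_one
    linarith
  have hw := welfare hS hW hlt (s₁ := 2) (s₂ := 0) (by norm_num)
  have h₁ : strong (f strong weak).1 ≤ 0 := hS.2.1 strong_one
  have h₂ : weak (f strong weak).2 ≤ 0 := hW.2.1 weak_one
  change (1 / 2 + d) * (1 + 0) ≤ _ at hw
  linarith
end
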